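/- In the poset P_k of disjoint supports on k elements, for any element {I,J} (with I, J nonempty proper disjoint subsets of [k]), the Möbius function satisfies μ(0̂, {I,J}) = (-1)^{k - |I| - |J| + 1}. -/

import Mathlib

open scoped Classical

/-- An element of the poset of disjoint supports: an unordered pair `{I,J}` of nonempty,
proper, disjoint subsets of `[k]`. -/
def IsDS {k : ℕ} (s : Sym2 (Finset (Fin k))) : Prop :=
  ∃ I J, s = s(I, J) ∧ I.Nonempty ∧ J.Nonempty ∧
    I ≠ Finset.univ ∧ J ≠ Finset.univ ∧ Disjoint I J

/-- The poset of disjoint supports on `k` elements, with `none` playing the role of `0̂`. -/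
def DS (k : ℕ) := Option {s : Sym2 (Finset (Fin k)) // IsDS s}

/-- The order on `DS k`: `0̂` is minimum, and `{R,T} ≼ {I,J}` whenever (up to relabeling)
`R ⊇ I` and `T ⊇ J`. -/
def DSle {k : ℕ} : DS k → DS k → Prop
  | none, _ => True
  | some _, none => False
  | some p, some q => ∃ R T I J, p.1 = s(R, T) ∧ q.1 = s(I, J) ∧ I ⊆ R ∧ J ⊆ T

noncomputable instance (k : ℕ) : Fintype (DS k) := by
  unfold DS; infer_instance

/-!
Write `{I, J}` with `I` as the first component. As `I` is nonempty, an element `≼ {I, J}` other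
than `0̂` comes from exactly one ordered pair `(R, T)` of disjoint sets with `I ⊆ R` and `J ⊆ T`,
that is, from one subinterval `[R, Tᶜ]` of `[I, Jᶜ]` in the Boolean lattice. For fixed `T` the signs
`(-1) ^ #(Tᶜ \ R)` sum to zero over `R` unless `Tᶜ = I`, so over all pairs they sum to `1`.
Hence the function with value `1` at `0̂` and `-(-1) ^ #(R ∪ T)ᶜ` at `{R, T}` sums to zero over the
elements `≼ {I, J}`, and Möbius inversion identifies it with `μ(0̂, ·)`.
-/

open Finset

section BooleanLattice

variable {α : Type*} [DecidableEq α]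

theorem sum_Icc_neg_one_pow_card_sdiff (s t : Finset α) :
    ∑ u ∈ Icc s t, (-1 : ℤ) ^ #(t \ u) = if s = t then 1 else 0 := by
  by_cases hst : s ⊆ t
  · calc ∑ u ∈ Icc s t, (-1 : ℤ) ^ #(t \ u)
        = ∑ v ∈ (t \ s).powerset, (-1 : ℤ) ^ #v := by
          refine sum_nbij' (t \ ·) (t \ ·) ?_ ?_ ?_ ?_ fun _ _ ↦ rfl
          · intro u hu
            exact mem_powerset.2 (sdiff_subset_sdiff Subset.rfl (mem_Icc.1 hu).1)
          · intro v hv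
            have hv' := mem_powerset.1 hv
            grind
          · intro u hu
            exact Finset.sdiff_sdiff_eq_self (mem_Icc.1 hu).2
          · intro v hv
            exact Finset.sdiff_sdiff_eq_self ((mem_powerset.1 hv).trans sdiff_subset)
      _ = if s = t then 1 else 0 := by
          rw [sum_powerset_neg_one_pow_card]
          exact if_congr (by rw [sdiff_eq_empty_iff_subset, hst.ge_iff_eq]) rfl rfl
  · rw [Icc_eq_empty hst, sum_empty, if_neg fun h ↦ hst h.subset]

variable [Fintype α]

/-- The ordered pairs of disjoint sets containing `I` and `J` respectively: the elements of the
poset of disjoint supports lying below `{I, J}`, other than `0̂`, with their components ordered. -/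
def disjointPairsAbove (I J : Finset α) : Finset (Finset α × Finset α) :=
  {p | I ⊆ p.1 ∧ J ⊆ p.2 ∧ Disjoint p.1 p.2}

theorem mem_disjointPairsAbove {I J : Finset α} {p : Finset α × Finset α} :
    p ∈ disjointPairsAbove I J ↔ I ⊆ p.1 ∧ J ⊆ p.2 ∧ Disjoint p.1 p.2 := by
  simp only [disjointPairsAbove, mem_filter_univ]

theorem self_mem_disjointPairsAbove {I J : Finset α} (hIJ : Disjoint I J) :
    (I, J) ∈ disjointPairsAbove I J :=
  mem_disjointPairsAbove.2 ⟨Subset.rfl, Subset.rfl, hIJ⟩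

theorem disjointPairsAbove_subset {I J : Finset α} {p : Finset α × Finset α}
    (hp : p ∈ disjointPairsAbove I J) :
    disjointPairsAbove p.1 p.2 ⊆ disjointPairsAbove I J := by
  intro q hq
  obtain ⟨hI, hJ, -⟩ := mem_disjointPairsAbove.1 hp
  obtain ⟨hp₁, hp₂, hq⟩ := mem_disjointPairsAbove.1 hq
  exact mem_disjointPairsAbove.2 ⟨hI.trans hp₁, hJ.trans hp₂, hq⟩

theorem eq_of_mem_disjointPairsAbove {I J : Finset α} {p : Finset α × Finset α}
    (hp : p ∈ disjointPairsAbove I J) (hIJ : (I, J) ∈ disjointPairsAbove p.1 p.2) :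
    p = (I, J) := by
  obtain ⟨hI, hJ, -⟩ := mem_disjointPairsAbove.1 hp
  obtain ⟨hI', hJ', -⟩ := mem_disjointPairsAbove.1 hIJ
  exact Prod.ext (hI'.antisymm hI) (hJ'.antisymm hJ)

theorem mem_disjointPairsAbove_iff_mem_Icc {I J : Finset α} {p : Finset α × Finset α} :
    p ∈ disjointPairsAbove I J ↔ p.2 ∈ Ici J ∧ p.1 ∈ Icc I p.2ᶜ := by
  rw [mem_disjointPairsAbove, mem_Ici, mem_Icc, le_compl_iff_disjoint_right]
  exact and_left_comm

theorem sum_disjointPairsAbove {I J : Finset α} (hIJ : Disjoint I J) :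
    ∑ p ∈ disjointPairsAbove I J, (-1 : ℤ) ^ #(p.1 ∪ p.2)ᶜ = 1 := by
  calc ∑ p ∈ disjointPairsAbove I J, (-1 : ℤ) ^ #(p.1 ∪ p.2)ᶜ
      = ∑ T ∈ Ici J, ∑ R ∈ Icc I Tᶜ, (-1 : ℤ) ^ #(R ∪ T)ᶜ :=
        sum_finset_product_right _ _ _ fun _ ↦ mem_disjointPairsAbove_iff_mem_Icc
    _ = ∑ T ∈ Ici J, ∑ R ∈ Icc I Tᶜ, (-1 : ℤ) ^ #(Tᶜ \ R) := by
        simp only [compl_union, sdiff_eq_inter_compl, inter_comm]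
    _ = ∑ T ∈ Ici J, if T = Iᶜ then 1 else 0 := by
        simp only [sum_Icc_neg_one_pow_card_sdiff, eq_compl_comm]
    _ = 1 := by
        rw [sum_ite_eq', if_pos (mem_Ici.2 (le_compl_iff_disjoint_left.2 hIJ))]

theorem injOn_sym2Mk_disjointPairsAbove {I J : Finset α} (hI : I.Nonempty) :
    Set.InjOn (fun p ↦ s(p.1, p.2)) (disjointPairsAbove I J : Set (Finset α × Finset α)) := by
  rintro ⟨R, T⟩ hp ⟨R', T'⟩ hq h
  obtain ⟨hIR, -, hRT⟩ := mem_disjointPairsAbove.1 hp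
  obtain ⟨hIR', -, -⟩ := mem_disjointPairsAbove.1 hq
  rcases Sym2.eq_iff.1 h with ⟨rfl, rfl⟩ | ⟨rfl, rfl⟩
  · rfl
  · obtain ⟨x, hx⟩ := hI
    exact absurd (hIR' hx) (disjoint_left.1 hRT (hIR hx))

end BooleanLattice

theorem eq_mu_bot_of_sum_Iic {𝕜 α : Type*} [Ring 𝕜] [PartialOrder α] [OrderBot α]
    [LocallyFiniteOrder α] [DecidableEq α] {f : α → 𝕜}
    (hf : ∀ x, ∑ y ∈ Iic x, f y = if x = ⊥ then 1 else 0) : f = IncidenceAlgebra.mu 𝕜 ⊥ := by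
  ext x
  rw [IncidenceAlgebra.moebius_inversion_bot f _ (fun _ ↦ rfl) x]
  simp [hf]

section DisjointSupports

variable {k : ℕ} {I J R T : Finset (Fin k)}

theorem isDS_mk_iff : IsDS s(I, J) ↔ I.Nonempty ∧ J.Nonempty ∧ Disjoint I J := by
  constructor
  · rintro ⟨A, B, h, hA, hB, -, -, hAB⟩
    rcases Sym2.eq_iff.1 h with ⟨rfl, rfl⟩ | ⟨rfl, rfl⟩
    · exact ⟨hA, hB, hAB⟩
    · exact ⟨hB, hA, hAB.symm⟩
  · rintro ⟨hI, hJ, hIJ⟩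
    refine ⟨I, J, rfl, hI, hJ, ?_, ?_, hIJ⟩
    · rintro rfl
      exact hJ.ne_empty (top_disjoint.1 hIJ)
    · rintro rfl
      exact hI.ne_empty (disjoint_top.1 hIJ)

theorem IsDS.of_mem_disjointPairsAbove {p : Finset (Fin k) × Finset (Fin k)}
    (h : IsDS s(I, J)) (hp : p ∈ disjointPairsAbove I J) : IsDS s(p.1, p.2) := by
  obtain ⟨hI, hJ, -⟩ := isDS_mk_iff.1 h
  obtain ⟨hIR, hJT, hRT⟩ := mem_disjointPairsAbove.1 hp
  exact isDS_mk_iff.2 ⟨hI.mono hIR, hJ.mono hJT, hRT⟩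

namespace DS

/-- The element `{I, J}` of the poset of disjoint supports. -/
def mk (h : IsDS s(I, J)) : DS k :=
  some ⟨s(I, J), h⟩

theorem mk_eq_mk_iff {h : IsDS s(I, J)} {h' : IsDS s(R, T)} :
    mk h = mk h' ↔ s(I, J) = s(R, T) :=
  Option.some_inj.trans Subtype.mk_eq_mk

theorem eq_none_or_eq_mk : ∀ x : DS k, x = none ∨ ∃ I J, ∃ h : IsDS s(I, J), x = mk h
  | none => Or.inl rfl
  | some ⟨s, h⟩ => by
    induction s with
    | _ I J => exact Or.inr ⟨I, J, h, rfl⟩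

theorem dsle_none_iff : ∀ {x : DS k}, DSle x none ↔ x = none
  | none => iff_of_true trivial rfl
  | some _ => iff_of_false id (Option.some_ne_none _)

theorem dsle_mk_iff {x : DS k} {h : IsDS s(I, J)} :
    DSle x (mk h) ↔ x = none ∨ ∃ p, ∃ hp : p ∈ disjointPairsAbove I J,
      x = mk (h.of_mem_disjointPairsAbove hp) := by
  constructor
  · obtain rfl | ⟨R, T, h', rfl⟩ := eq_none_or_eq_mk x
    · exact fun _ ↦ Or.inl rfl
    · rintro ⟨A, B, C, D, hAB, hCD, hA, hB⟩
      have hdisj : Disjoint A B := (isDS_mk_iff.1 (hAB ▸ h')).2.2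
      rcases Sym2.eq_iff.1 hCD with ⟨rfl, rfl⟩ | ⟨rfl, rfl⟩
      · exact Or.inr ⟨(A, B), mem_disjointPairsAbove.2 ⟨hA, hB, hdisj⟩, mk_eq_mk_iff.2 hAB⟩
      · exact Or.inr ⟨(B, A), mem_disjointPairsAbove.2 ⟨hB, hA, hdisj.symm⟩,
          mk_eq_mk_iff.2 (hAB.trans Sym2.eq_swap)⟩
  · rintro (rfl | ⟨p, hp, rfl⟩)
    · trivial
    · obtain ⟨hI, hJ, -⟩ := mem_disjointPairsAbove.1 hp
      exact ⟨p.1, p.2, I, J, rfl, rfl, hI, hJ⟩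

theorem dsle_refl (x : DS k) : DSle x x := by
  obtain rfl | ⟨I, J, h, rfl⟩ := eq_none_or_eq_mk x
  · trivial
  · exact dsle_mk_iff.2 (Or.inr ⟨_, self_mem_disjointPairsAbove (isDS_mk_iff.1 h).2.2, rfl⟩)

theorem dsle_trans {x y z : DS k} (hxy : DSle x y) (hyz : DSle y z) : DSle x z := by
  obtain rfl | ⟨I, J, h, rfl⟩ := eq_none_or_eq_mk z
  · rwa [dsle_none_iff.1 hyz] at hxy
  · obtain rfl | ⟨p, hp, rfl⟩ := dsle_mk_iff.1 hyz
    · rw [dsle_none_iff.1 hxy]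
      trivial
    · obtain rfl | ⟨q, hq, rfl⟩ := dsle_mk_iff.1 hxy
      · trivial
      · exact dsle_mk_iff.2 (Or.inr ⟨q, disjointPairsAbove_subset hp hq, rfl⟩)

theorem dsle_antisymm {x y : DS k} (hxy : DSle x y) (hyx : DSle y x) : x = y := by
  obtain rfl | ⟨I, J, h, rfl⟩ := eq_none_or_eq_mk y
  · exact dsle_none_iff.1 hxy
  · obtain ⟨hI, -, hIJ⟩ := isDS_mk_iff.1 h
    obtain rfl | ⟨p, hp, rfl⟩ := dsle_mk_iff.1 hxy
    · exact (dsle_none_iff.1 hyx).symm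
    · obtain hnone | ⟨q, hq, hqIJ⟩ := dsle_mk_iff.1 hyx
      · exact absurd hnone (Option.some_ne_none _)
      · have hIJq : (I, J) = q := injOn_sym2Mk_disjointPairsAbove hI
          (self_mem_disjointPairsAbove hIJ) (disjointPairsAbove_subset hp hq)
          (mk_eq_mk_iff.1 hqIJ)
        obtain rfl := eq_of_mem_disjointPairsAbove hp (hIJq ▸ hq)
        rfl

instance : PartialOrder (DS k) where
  le := DSle
  le_refl := dsle_refl
  le_trans _ _ _ := dsle_trans
  le_antisymm _ _ := dsle_antisymm

instance : OrderBot (DS k) where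
  bot := none
  bot_le _ := trivial

noncomputable instance : LocallyFiniteOrder (DS k) := Fintype.toLocallyFiniteOrder

theorem mk_ne_bot (h : IsDS s(I, J)) : mk h ≠ ⊥ :=
  Option.some_ne_none _

theorem le_mk_iff {x : DS k} {h : IsDS s(I, J)} :
    x ≤ mk h ↔ x = ⊥ ∨ ∃ p, ∃ hp : p ∈ disjointPairsAbove I J,
      x = mk (h.of_mem_disjointPairsAbove hp) :=
  dsle_mk_iff

theorem sum_Iic_mk {M : Type*} [AddCommMonoid M] {g : DS k → M}
    {f : Finset (Fin k) → Finset (Fin k) → M}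
    (hgf : ∀ {R T : Finset (Fin k)} (h : IsDS s(R, T)), g (mk h) = f R T) (h : IsDS s(I, J)) :
    ∑ z ∈ Iic (mk h), g z = g ⊥ + ∑ p ∈ disjointPairsAbove I J, f p.1 p.2 := by
  rw [← add_sum_erase _ g (mem_Iic.2 bot_le)]
  congr 1
  symm
  refine sum_bij (fun _ hp ↦ mk (h.of_mem_disjointPairsAbove hp)) ?_ ?_ ?_ ?_
  · intro p hp
    exact mem_erase.2 ⟨mk_ne_bot _, mem_Iic.2 (le_mk_iff.2 (Or.inr ⟨p, hp, rfl⟩))⟩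
  · intro p hp q hq hpq
    exact injOn_sym2Mk_disjointPairsAbove (isDS_mk_iff.1 h).1 hp hq (mk_eq_mk_iff.1 hpq)
  · intro z hz
    obtain ⟨hz_ne, hz_le⟩ := mem_erase.1 hz
    obtain ⟨p, hp, rfl⟩ := (le_mk_iff.1 (mem_Iic.1 hz_le)).resolve_left hz_ne
    exact ⟨p, hp, rfl⟩
  · intro p hp
    exact (hgf _).symm

/-- The closed form of the Möbius function `μ(0̂, ·)` on the poset of disjoint supports. The
exponent `k - |I| - |J|` is encoded as the size of the complement of `I ∪ J`, which avoids
truncated subtraction. -/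
def mobiusFormula : DS k → ℤ
  | none => 1
  | some p => -(-1) ^ #(p.1.sup)ᶜ

theorem mobiusFormula_mk (h : IsDS s(I, J)) : mobiusFormula (mk h) = -(-1) ^ #(I ∪ J)ᶜ :=
  rfl

theorem sum_Iic_mobiusFormula (x : DS k) :
    ∑ z ∈ Iic x, mobiusFormula z = if x = ⊥ then 1 else 0 := by
  obtain rfl | ⟨I, J, h, rfl⟩ := eq_none_or_eq_mk x
  · change ∑ z ∈ Iic ⊥, mobiusFormula z = if (⊥ : DS k) = ⊥ then 1 else 0
    rw [Iic_bot, sum_singleton, if_pos rfl]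
    rfl
  · rw [if_neg (mk_ne_bot h), sum_Iic_mk mobiusFormula_mk, sum_neg_distrib,
      sum_disjointPairsAbove (isDS_mk_iff.1 h).2.2]
    exact add_neg_cancel 1

theorem mu_bot_mk (h : IsDS s(I, J)) :
    IncidenceAlgebra.mu ℤ ⊥ (mk h) = (-1) ^ (k - #I - #J + 1) := by
  have hcard : #(I ∪ J)ᶜ = k - #I - #J := by
    rw [card_compl, card_union_of_disjoint (isDS_mk_iff.1 h).2.2, Fintype.card_fin, Nat.sub_sub]
  rw [← eq_mu_bot_of_sum_Iic sum_Iic_mobiusFormula, mobiusFormula_mk, hcard, pow_succ, mul_neg_one]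

end DS

end DisjointSupports

/-- in the poset of disjoint supports,
`μ(0̂, {I,J}) = (-1)^(k - |I| - |J| + 1)`. -/
theorem stmt2 (k : ℕ) (μ : DS k → ℤ) (hμ0 : μ none = 1)
    (hμ : ∀ x : DS k, x ≠ none →
      μ x = -∑ z : DS k, if DSle z x ∧ z ≠ x then μ z else 0)
    (I J : Finset (Fin k)) (hI : I.Nonempty) (hJ : J.Nonempty)
    (hIu : I ≠ Finset.univ) (hJu : J ≠ Finset.univ) (hd : Disjoint I J) :
    μ (some ⟨s(I, J), ⟨I, J, rfl, hI, hJ, hIu, hJu, hd⟩⟩) =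
      (-1) ^ (k - I.card - J.card + 1) := by
  have hμ_sum (x : DS k) : ∑ z ∈ Iic x, μ z = if x = ⊥ then 1 else 0 := by
    split_ifs with hx
    · rw [hx, Iic_bot, sum_singleton]
      exact hμ0
    · have hIio : ({z | DSle z x ∧ z ≠ x} : Finset (DS k)) = Iio x := by
        ext z
        rw [mem_filter_univ, mem_Iio, lt_iff_le_and_ne]
        rfl
      rw [← add_sum_Iio_eq_sum_Iic, hμ x hx, ← sum_filter, hIio, neg_add_cancel]
  rw [eq_mu_bot_of_sum_Iic hμ_sum]
  exact DS.mu_bot_mk _
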